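/- arXiv:1512.05423 — 4 statements merged into one kernel-verified Lean document; each statement's English description precedes it below -/
import Mathlib

section
/- Let X^n be a random vector in ℝ^n with finite second moments whose probability density f^(n) is (c1,c2)-regular, and let g^(n) be the Gaussian density on ℝ^n with the same mean vector and covariance matrix as f^(n). Then D(f^(n) ‖ g^(n)) ≤ (c1·√(E[‖X^n‖²]) + c2) · 2·√(E[‖X^n‖²]). -/
open MeasureTheory Real ProbabilityTheory
open scoped BigOperators ENNReal

noncomputable section

/-- A probability density on `ℝⁿ` (Euclidean space): nonnegative, integrable, integrating to one. -/
def IsDensity {n : ℕ} (f : EuclideanSpace ℝ (Fin n) → ℝ) : Prop :=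
  (∀ x, 0 ≤ f x) ∧ Integrable f ∧ (∫ x, f x) = 1

/-- `(c₁, c₂)`-regularity of a density (Polyanskiy–Wu): everywhere positive, differentiable,
and `‖∇ log f(x)‖ ≤ c₁‖x‖ + c₂`. -/
def IsRegularDensity {n : ℕ} (c₁ c₂ : ℝ) (f : EuclideanSpace ℝ (Fin n) → ℝ) : Prop :=
  (∀ x, 0 < f x) ∧ Differentiable ℝ f ∧
    ∀ x : EuclideanSpace ℝ (Fin n),
      ‖gradient (fun y => Real.log (f y)) x‖ ≤ c₁ * ‖x‖ + c₂

/-- Kullback–Leibler divergence between two densities (natural logarithm). -/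
def klDiv' {n : ℕ} (f g : EuclideanSpace ℝ (Fin n) → ℝ) : ℝ :=
  ∫ x, f x * Real.log (f x / g x)

/-- Mean vector of a density. -/
def meanVec {n : ℕ} (f : EuclideanSpace ℝ (Fin n) → ℝ) : Fin n → ℝ :=
  fun i => ∫ x, f x * x i

/-- Covariance matrix of a density. -/
def covMat {n : ℕ} (f : EuclideanSpace ℝ (Fin n) → ℝ) : Matrix (Fin n) (Fin n) ℝ :=
  Matrix.of fun i j => ∫ x, f x * (x i - meanVec f i) * (x j - meanVec f j)

/-- The Gaussian density on `ℝⁿ` with mean vector `m` and covariance matrix `R`. -/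
def gaussDensity {n : ℕ} (m : Fin n → ℝ) (R : Matrix (Fin n) (Fin n) ℝ)
    (x : EuclideanSpace ℝ (Fin n)) : ℝ :=
  (2 * π) ^ (-(n : ℝ) / 2) * R.det ^ (-(1 : ℝ) / 2) *
    Real.exp (-(1 / 2) * ∑ i, ∑ j, (x i - m i) * R⁻¹ i j * (x j - m j))

/-- `D(f) = D(f ‖ g)` where `g` is the Gaussian density with the same mean vector and
covariance matrix as `f`. -/
def KLtoGauss {n : ℕ} (f : EuclideanSpace ℝ (Fin n) → ℝ) : ℝ :=
  klDiv' f (gaussDensity (meanVec f) (covMat f))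

/-- The vector `(X_k, X_{k+1}, …, X_{k+n-1})` of a process, as a point of Euclidean space. -/
def pathVec {Ω : Type*} (X : ℕ → Ω → ℝ) (k n : ℕ) (ω : Ω) : EuclideanSpace ℝ (Fin n) :=
  (WithLp.equiv 2 (Fin n → ℝ)).symm fun i : Fin n => X (k + i) ω

/-- The centered isotropic Gaussian density on `ℝⁿ` with covariance `v • Iₙ`. -/
def isoGaussDensity (n : ℕ) (v : ℝ) (x : EuclideanSpace ℝ (Fin n)) : ℝ :=
  (2 * π * v) ^ (-(n : ℝ) / 2) * Real.exp (-‖x‖ ^ 2 / (2 * v))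

/-- Log-concavity of a nonnegative function. -/
def LogConcaveFn {n : ℕ} (f : EuclideanSpace ℝ (Fin n) → ℝ) : Prop :=
  ∀ x y : EuclideanSpace ℝ (Fin n), ∀ t : ℝ, 0 ≤ t → t ≤ 1 →
    f x ^ t * f y ^ (1 - t) ≤ f (t • x + (1 - t) • y)

/-- A zero-mean Gaussian random vector with covariance matrix `R`: every linear functional of it
is a centered real Gaussian with the corresponding variance. -/
def IsCenteredGaussianVec {Ω : Type*} [MeasurableSpace Ω] {n : ℕ} (P : Measure Ω)
    (W : Ω → EuclideanSpace ℝ (Fin n)) (R : Matrix (Fin n) (Fin n) ℝ) : Prop :=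
  ∀ a : Fin n → ℝ, Measure.map (fun ω => ∑ i, a i * W ω i) P
    = gaussianReal 0 (Real.toNNReal (∑ i, ∑ j, a i * R i j * a j))

/-- Hadamard (element-wise) product of two Euclidean vectors. -/
def hadamard {n : ℕ} (u v : EuclideanSpace ℝ (Fin n)) : EuclideanSpace ℝ (Fin n) :=
  (WithLp.equiv 2 (Fin n → ℝ)).symm fun i => u i * v i

end

noncomputable section
open MeasureTheory Real ProbabilityTheory

/-!
Write `P` for the law with density `f`, `γ` for the law with density `g`, and `M` for their common
second moment `E‖X‖²`. The divergence is controlled by its symmetrisation,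
`D(f ‖ g) ≤ D(f ‖ g) + D(g ‖ f) = ∫ log f dP - ∫ log f dγ`: the terms in `log g` cancel, since
`log g` is a quadratic polynomial and `P` and `γ` have the same first and second moments.
Regularity and the mean value inequality give `|log f(x) - log f(0)| ≤ c₁‖x‖² + c₂‖x‖`, so each of
the two integrals is within `c₁M + c₂√M` of `log f(0)`. The moments of `γ` are read off from those
of a standard Gaussian vector, of which `γ` is the image under `z ↦ m + √R z`.
-/

section Density

variable {α : Type*} [MeasureSpace α] {f g : α → ℝ}

/-- The measure with density `f` with respect to Lebesgue measure (more generally, the canonical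
volume). Negative values of `f` are truncated to `0`. -/
def densityLaw (f : α → ℝ) : Measure α :=
  volume.withDensity fun x => ENNReal.ofReal (f x)

lemma integral_densityLaw {E : Type*} [NormedAddCommGroup E] [NormedSpace ℝ E]
    (hf : ∀ x, 0 ≤ f x) (hfm : AEMeasurable f) (φ : α → E) :
    ∫ x, φ x ∂densityLaw f = ∫ x, f x • φ x := by
  rw [densityLaw, integral_withDensity_eq_integral_toReal_smul₀ hfm.ennreal_ofReal
    (ae_of_all _ fun _ => ENNReal.ofReal_lt_top)]
  simp only [ENNReal.toReal_ofReal (hf _)]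

lemma integrable_densityLaw_iff {E : Type*} [NormedAddCommGroup E] [NormedSpace ℝ E]
    (hf : ∀ x, 0 ≤ f x) (hfm : AEMeasurable f) {φ : α → E} :
    Integrable φ (densityLaw f) ↔ Integrable fun x => f x • φ x := by
  rw [densityLaw, integrable_withDensity_iff_integrable_smul₀' hfm.ennreal_ofReal
    (ae_of_all _ fun _ => ENNReal.ofReal_lt_top)]
  simp only [ENNReal.toReal_ofReal (hf _)]

lemma isProbabilityMeasure_densityLaw (hf : ∀ x, 0 ≤ f x) (hfi : Integrable f)
    (hf1 : ∫ x, f x = 1) : IsProbabilityMeasure (densityLaw f) where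
  measure_univ := by
    rw [densityLaw, withDensity_apply _ .univ, Measure.restrict_univ,
      ← ofReal_integral_eq_lintegral_ofReal hfi (ae_of_all _ hf), hf1, ENNReal.ofReal_one]

lemma isOpenPosMeasure_densityLaw [TopologicalSpace α]
    [(volume : Measure α).IsOpenPosMeasure] (hf : ∀ x, 0 < f x) (hfm : AEMeasurable f) :
    (densityLaw f).IsOpenPosMeasure :=
  (withDensity_absolutelyContinuous' hfm.ennreal_ofReal
    (ae_of_all _ fun x => (ENNReal.ofReal_pos.2 (hf x)).ne')).isOpenPosMeasure

lemma integral_log_le_integral_log_self (hf : ∀ x, 0 < f x) (hg : ∀ x, 0 < g x)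
    (hfi : Integrable f) (hgi : Integrable g) (hfg : ∫ x, f x = ∫ x, g x)
    (hlf : Integrable (fun x => log (f x)) (densityLaw g))
    (hlg : Integrable (fun x => log (g x)) (densityLaw g)) :
    ∫ x, log (f x) ∂densityLaw g ≤ ∫ x, log (g x) ∂densityLaw g := by
  have hg0 : ∀ x, 0 ≤ g x := fun x => (hg x).le
  have hgm := hgi.aemeasurable
  have hpt : ∀ x, g x * (log (f x) - log (g x)) ≤ f x - g x := fun x => by
    rw [← log_div (hf x).ne' (hg x).ne']
    calc g x * log (f x / g x) ≤ g x * (f x / g x - 1) :=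
          mul_le_mul_of_nonneg_left (log_le_sub_one_of_pos (div_pos (hf x) (hg x))) (hg0 x)
      _ = f x - g x := by field_simp [(hg x).ne']
  rw [← sub_nonpos, ← integral_sub hlf hlg, integral_densityLaw hg0 hgm]
  calc ∫ x, g x * (log (f x) - log (g x)) ≤ ∫ x, (f x - g x) :=
        integral_mono ((integrable_densityLaw_iff hg0 hgm).1 (hlf.sub hlg)) (hfi.sub hgi) hpt
    _ = 0 := by rw [integral_sub hfi hgi, hfg, sub_self]

end Density

lemma klDiv'_eq_integral_log_sub_integral_log {n : ℕ} {f g : EuclideanSpace ℝ (Fin n) → ℝ}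
    (hf : ∀ x, 0 < f x) (hg : ∀ x, 0 < g x) (hfm : AEMeasurable f)
    (hlf : Integrable (fun x => log (f x)) (densityLaw f))
    (hlg : Integrable (fun x => log (g x)) (densityLaw f)) :
    klDiv' f g = ∫ x, log (f x) ∂densityLaw f - ∫ x, log (g x) ∂densityLaw f := by
  rw [← integral_sub hlf hlg, integral_densityLaw (fun x => (hf x).le) hfm]
  simp only [klDiv', smul_eq_mul, log_div (hf _).ne' (hg _).ne']

lemma map_withDensity_comp {α β : Type*} [MeasurableSpace α] [MeasurableSpace β] (μ : Measure α)
    {T : α → β} (hT : Measurable T) {φ : β → ℝ≥0∞} (hφ : Measurable φ) :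
    (μ.withDensity (φ ∘ T)).map T = (μ.map T).withDensity φ := by
  ext s hs
  rw [Measure.map_apply hT hs, withDensity_apply _ (hT hs), withDensity_apply _ hs,
    setLIntegral_map hs hφ hT]
  rfl

lemma map_const_add_clm_addHaar {E : Type*} [NormedAddCommGroup E] [NormedSpace ℝ E]
    [MeasurableSpace E] [BorelSpace E] [FiniteDimensional ℝ E] (μ : Measure E)
    [μ.IsAddHaarMeasure] (a : E) {L : E →L[ℝ] E} (hL : L.det ≠ 0) :
    μ.map (fun x => a + L x) = ENNReal.ofReal |L.det⁻¹| • μ := by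
  have hLμ : μ.map L = ENNReal.ofReal |L.det⁻¹| • μ :=
    Measure.map_linearMap_addHaar_eq_smul_addHaar μ hL
  have hcomp : (fun x => a + L x) = (a + ·) ∘ L := rfl
  rw [hcomp, ← Measure.map_map (measurable_const_add a) L.measurable, hLμ, Measure.map_smul,
    map_add_left_eq_self]

lemma map_withDensity_abs_det_mul_comp_affine {E : Type*} [NormedAddCommGroup E] [NormedSpace ℝ E]
    [MeasurableSpace E] [BorelSpace E] [FiniteDimensional ℝ E] (μ : Measure E)
    [μ.IsAddHaarMeasure] (a : E) {L : E →L[ℝ] E} (hL : L.det ≠ 0) {φ : E → ℝ≥0∞}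
    (hφ : Measurable φ) :
    (μ.withDensity fun x => ENNReal.ofReal |L.det| * φ (a + L x)).map (fun x => a + L x) =
      μ.withDensity φ := by
  have hcancel : ENNReal.ofReal |L.det⁻¹| * ENNReal.ofReal |L.det| = 1 := by
    rw [← ENNReal.ofReal_mul (abs_nonneg _), ← abs_mul, inv_mul_cancel₀ hL, abs_one,
      ENNReal.ofReal_one]
  calc (μ.withDensity fun x => ENNReal.ofReal |L.det| * φ (a + L x)).map (fun x => a + L x)
      = (μ.map fun x => a + L x).withDensity (ENNReal.ofReal |L.det| • φ) :=
        map_withDensity_comp μ (T := fun x => a + L x) (φ := ENNReal.ofReal |L.det| • φ)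
          (by fun_prop) (hφ.const_smul _)
    _ = μ.withDensity φ := by
        rw [map_const_add_clm_addHaar μ a hL, withDensity_smul_measure, withDensity_smul _ hφ,
          smul_smul, hcancel, one_smul]

section StdGaussian

variable {E : Type*} [NormedAddCommGroup E] [InnerProductSpace ℝ E] [FiniteDimensional ℝ E]
  [MeasurableSpace E] [BorelSpace E]

lemma integrable_exp_neg_mul_norm_sq {b : ℝ} (hb : 0 < b) :
    Integrable fun x : E => exp (-b * ‖x‖ ^ 2) := by
  have h := (GaussianFourier.integrable_cexp_neg_mul_sq_norm_add (V := E) (b := (b : ℂ))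
    (by rwa [Complex.ofReal_re]) 0 0).norm
  refine h.congr (ae_of_all _ fun x => ?_)
  simp only [Complex.norm_exp, inner_zero_left, Complex.ofReal_zero, mul_zero, add_zero,
    ← Complex.ofReal_neg, ← Complex.ofReal_pow, ← Complex.ofReal_mul, Complex.ofReal_re]

variable (E) in
lemma stdGaussian_eq_densityLaw :
    stdGaussian E = densityLaw fun x : E =>
      (2 * π) ^ (-(Module.finrank ℝ E : ℝ) / 2) * exp (-(1 / 2) * ‖x‖ ^ 2) := by
  set c : ℝ := (2 * π) ^ (-(Module.finrank ℝ E : ℝ) / 2)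
  have hfin : IsFiniteMeasure (densityLaw fun x : E => c * exp (-(1 / 2) * ‖x‖ ^ 2)) :=
    isFiniteMeasure_withDensity_ofReal
      ((integrable_exp_neg_mul_norm_sq one_half_pos).const_mul c).2
  refine Measure.ext_of_charFun (funext fun t => ?_)
  have hc : (c : ℂ) * (π / (1 / 2)) ^ (Module.finrank ℝ E / 2 : ℂ) = 1 := by
    have hpow : (π / (1 / 2) : ℂ) ^ (Module.finrank ℝ E / 2 : ℂ) =
        (((2 * π) ^ ((Module.finrank ℝ E : ℝ) / 2) : ℝ) : ℂ) := by
      rw [Complex.ofReal_cpow (by positivity)]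
      push_cast
      congr 1
      ring
    rw [hpow, ← Complex.ofReal_mul, ← rpow_add (by positivity), neg_div, neg_add_cancel, rpow_zero,
      Complex.ofReal_one]
  have hF := GaussianFourier.integral_cexp_neg_mul_sq_norm_add (V := E) (b := 1 / 2)
    (by norm_num) Complex.I t
  calc charFun (stdGaussian E) t = Complex.exp (Complex.I ^ 2 * ‖t‖ ^ 2 / (4 * (1 / 2))) := by
        rw [charFun_stdGaussian, Complex.I_sq]
        ring_nf
    _ = c * ∫ x : E, Complex.exp (-(1 / 2) * ‖x‖ ^ 2 + Complex.I * inner ℝ t x) := by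
        rw [hF, ← mul_assoc, hc, one_mul]
    _ = charFun (densityLaw fun x : E => c * exp (-(1 / 2) * ‖x‖ ^ 2)) t := by
        rw [charFun_apply, integral_densityLaw (fun x => by positivity) (by fun_prop),
          ← integral_const_mul]
        refine integral_congr_ae (ae_of_all _ fun x => ?_)
        dsimp only
        rw [Complex.exp_add, Complex.real_smul, real_inner_comm, mul_comm Complex.I]
        push_cast
        ring

end StdGaussian

section Multivariate

open scoped MatrixOrder Matrix.Norms.L2Operator

variable {n : ℕ} {m : Fin n → ℝ} {R : Matrix (Fin n) (Fin n) ℝ}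

lemma gaussDensity_pos (hR : 0 < R.det) (x : EuclideanSpace ℝ (Fin n)) :
    0 < gaussDensity m R x := by
  unfold gaussDensity
  positivity

lemma continuous_gaussDensity : Continuous (gaussDensity m R) := by
  unfold gaussDensity
  fun_prop

lemma log_gaussDensity (hR : 0 < R.det) (x : EuclideanSpace ℝ (Fin n)) :
    log (gaussDensity m R x) = log ((2 * π) ^ (-(n : ℝ) / 2) * R.det ^ (-(1 : ℝ) / 2)) -
      1 / 2 * ∑ i, ∑ j, (x i - m i) * R⁻¹ i j * (x j - m j) := by
  rw [gaussDensity, log_mul (by positivity) (by positivity), log_exp]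
  ring

lemma mulVec_dotProduct_inv_mulVec_mulVec {ι K : Type*} [Fintype ι] [DecidableEq ι] [CommRing K]
    {S : Matrix ι ι K} (hS : IsUnit S.det) (z : ι → K) :
    S.mulVec z ⬝ᵥ (S * S.transpose)⁻¹.mulVec (S.mulVec z) = z ⬝ᵥ z := by
  rw [Matrix.mulVec_mulVec, Matrix.mul_inv_rev, Matrix.mul_assoc, Matrix.nonsing_inv_mul S hS,
    Matrix.mul_one, Matrix.dotProduct_mulVec, ← Matrix.vecMul_transpose, Matrix.vecMul_vecMul,
    Matrix.mul_nonsing_inv _ (Matrix.isUnit_det_transpose S hS), Matrix.vecMul_one]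

lemma abs_det_mul_gaussDensity_affine {S : Matrix (Fin n) (Fin n) ℝ} (hS : S.det ≠ 0)
    (z : EuclideanSpace ℝ (Fin n)) :
    |S.det| * gaussDensity m (S * S.transpose)
      (WithLp.toLp 2 m + Matrix.toEuclideanCLM (𝕜 := ℝ) S z) =
    (2 * π) ^ (-(n : ℝ) / 2) * exp (-(1 / 2) * ‖z‖ ^ 2) := by
  have hdet : |S.det| * (S * S.transpose).det ^ (-(1 : ℝ) / 2) = 1 := by
    rw [Matrix.det_mul, Matrix.det_transpose, ← abs_mul_abs_self, neg_div,
      rpow_neg (by positivity), ← sqrt_eq_rpow, sqrt_mul_self (abs_nonneg _),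
      mul_inv_cancel₀ (abs_ne_zero.2 hS)]
  have hquad : ∑ i, ∑ j, S.mulVec z.ofLp i * (S * S.transpose)⁻¹ i j * S.mulVec z.ofLp j =
      ‖z‖ ^ 2 := by
    have hz := mulVec_dotProduct_inv_mulVec_mulVec (isUnit_iff_ne_zero.2 hS) z.ofLp
    simpa only [dotProduct, Matrix.mulVec, Finset.mul_sum, mul_assoc, ← sq,
      ← EuclideanSpace.real_norm_sq_eq] using hz
  simp only [gaussDensity, PiLp.add_apply, Matrix.ofLp_toEuclideanCLM, add_sub_cancel_left, hquad]
  rw [mul_comm _ ((S * S.transpose).det ^ _), ← mul_assoc, ← mul_assoc, hdet, one_mul]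

lemma multivariateGaussian_eq_densityLaw (hR : R.PosDef) :
    multivariateGaussian (WithLp.toLp 2 m) R = densityLaw (gaussDensity m R) := by
  set S := CFC.sqrt R
  have hSS : S * S.transpose = R := by
    have hSt : S.transpose = S := (CFC.sqrt_nonneg R).isSelfAdjoint
    rw [hSt, CFC.sqrt_mul_sqrt_self R hR.posSemidef.nonneg]
  have hS : S.det ≠ 0 := fun h => hR.det_pos.ne' (by rw [← hSS, Matrix.det_mul, h, zero_mul])
  have hL : (Matrix.toEuclideanCLM (𝕜 := ℝ) S).det = S.det := LinearMap.det_toLpLin 2 S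
  have hpull : stdGaussian (EuclideanSpace ℝ (Fin n)) =
      volume.withDensity fun z => ENNReal.ofReal |(Matrix.toEuclideanCLM (𝕜 := ℝ) S).det| *
        ENNReal.ofReal (gaussDensity m R
          (WithLp.toLp 2 m + Matrix.toEuclideanCLM (𝕜 := ℝ) S z)) := by
    rw [stdGaussian_eq_densityLaw, densityLaw, finrank_euclideanSpace_fin]
    congr 1 with z
    rw [← abs_det_mul_gaussDensity_affine (m := m) hS, hSS, ENNReal.ofReal_mul (abs_nonneg _), hL]
  rw [multivariateGaussian, hpull, map_withDensity_abs_det_mul_comp_affine _ _ (hL ▸ hS)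
    continuous_gaussDensity.measurable.ennreal_ofReal, densityLaw]

end Multivariate

section Moments

variable {ι : Type*} [Fintype ι]

/-- `HasMeanCov μ m R` says that the law `μ` on a finite-dimensional Euclidean space has finite
second moments, mean vector `m` and covariance matrix `R`. -/
structure HasMeanCov (μ : Measure (EuclideanSpace ℝ ι)) (m : ι → ℝ) (R : Matrix ι ι ℝ) :
    Prop where
  memLp_two_id : MemLp id 2 μ
  integral_eval : ∀ i, ∫ x, x i ∂μ = m i
  covariance_eval : ∀ i j, cov[fun x => x i, fun x => x j; μ] = R i j

namespace HasMeanCov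

variable {μ : Measure (EuclideanSpace ℝ ι)} {m : ι → ℝ} {R : Matrix ι ι ℝ}

lemma memLp_two_eval (h : HasMeanCov μ m R) (i : ι) : MemLp (fun x => x i) 2 μ :=
  h.memLp_two_id.eval_piLp i

lemma integral_norm_sq [IsProbabilityMeasure μ] (h : HasMeanCov μ m R) :
    ∫ x, ‖x‖ ^ 2 ∂μ = ∑ i, (R i i + m i ^ 2) := by
  simp only [EuclideanSpace.real_norm_sq_eq]
  rw [integral_finsetSum _ fun i _ => (h.memLp_two_eval i).integrable_sq]
  refine Finset.sum_congr rfl fun i _ => ?_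
  rw [← h.covariance_eval, covariance_self (h.memLp_two_eval i).aemeasurable,
    variance_eq_sub (h.memLp_two_eval i), h.integral_eval]
  exact (sub_add_cancel _ _).symm

lemma integrable_centered_monomial [IsFiniteMeasure μ] (h : HasMeanCov μ m R) (q : ℝ) (i j : ι) :
    Integrable (fun x => (x i - m i) * q * (x j - m j)) μ :=
  (((h.memLp_two_eval i).sub (memLp_const _)).mul_const _).integrable_mul
    ((h.memLp_two_eval j).sub (memLp_const _))

lemma integrable_centered_quadratic [IsFiniteMeasure μ] (h : HasMeanCov μ m R)
    (Q : Matrix ι ι ℝ) :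
    Integrable (fun x => ∑ i, ∑ j, (x i - m i) * Q i j * (x j - m j)) μ :=
  integrable_finsetSum _ fun i _ => integrable_finsetSum _ fun j _ =>
    h.integrable_centered_monomial _ i j

lemma integral_centered_quadratic [IsFiniteMeasure μ] (h : HasMeanCov μ m R) (Q : Matrix ι ι ℝ) :
    ∫ x, ∑ i, ∑ j, (x i - m i) * Q i j * (x j - m j) ∂μ = ∑ i, ∑ j, Q i j * R i j := by
  have hint : ∀ i j, Integrable (fun x => (x i - m i) * Q i j * (x j - m j)) μ := fun i j =>
    h.integrable_centered_monomial (Q i j) i j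
  rw [integral_finsetSum _ fun i _ => integrable_finsetSum _ fun j _ => hint i j]
  refine Finset.sum_congr rfl fun i _ => ?_
  rw [integral_finsetSum _ fun j _ => hint i j]
  refine Finset.sum_congr rfl fun j _ => ?_
  rw [← h.covariance_eval, covariance, h.integral_eval, h.integral_eval, ← integral_const_mul]
  exact integral_congr_ae (ae_of_all _ fun x => by ring)

lemma variance_dotProduct [IsFiniteMeasure μ] (h : HasMeanCov μ m R) (v : ι → ℝ) :
    Var[fun x => v ⬝ᵥ x.ofLp; μ] = v ⬝ᵥ R.mulVec v := by
  have hv : ∀ i, MemLp (fun x : EuclideanSpace ℝ ι => v i * x i) 2 μ := fun i =>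
    (h.memLp_two_eval i).const_mul (v i)
  simp only [dotProduct, Matrix.mulVec]
  rw [variance_fun_sum hv]
  simp only [covariance_const_mul_left, covariance_const_mul_right, h.covariance_eval,
    Finset.mul_sum]
  exact Finset.sum_congr rfl fun i _ => Finset.sum_congr rfl fun j _ => by ring

lemma posDef [IsFiniteMeasure μ] [μ.IsOpenPosMeasure] (h : HasMeanCov μ m R) : R.PosDef := by
  have hsymm : R.IsHermitian := Matrix.IsHermitian.ext fun i j => by
    rw [star_trivial, ← h.covariance_eval, covariance_comm, h.covariance_eval]
  refine Matrix.PosDef.of_dotProduct_mulVec_pos hsymm fun v hv => ?_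
  rw [star_trivial, ← h.variance_dotProduct]
  refine (variance_nonneg _ _).lt_of_ne' fun hvar => hv ?_
  have hmem : MemLp (fun x : EuclideanSpace ℝ ι => v ⬝ᵥ x.ofLp) 2 μ :=
    memLp_finsetSum _ fun i _ => (h.memLp_two_eval i).const_mul (v i)
  have hconst : (fun x : EuclideanSpace ℝ ι => v ⬝ᵥ x.ofLp) =
      fun _ => ∫ x, v ⬝ᵥ x.ofLp ∂μ :=
    (Continuous.ae_eq_iff_eq μ (by unfold dotProduct; fun_prop) continuous_const).1
      (ae_eq_integral_of_variance_eq_zero hmem hvar)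
  have hzero : v ⬝ᵥ v = v ⬝ᵥ 0 :=
    (congrFun hconst (WithLp.toLp 2 v)).trans (congrFun hconst 0).symm
  rwa [dotProduct_zero, dotProduct_self_eq_zero] at hzero

end HasMeanCov

lemma hasMeanCov_multivariateGaussian [DecidableEq ι] {m : EuclideanSpace ℝ ι}
    {R : Matrix ι ι ℝ} (hR : R.PosSemidef) : HasMeanCov (multivariateGaussian m R) m R where
  memLp_two_id := IsGaussian.memLp_two_id
  integral_eval i := by
    have h := (EuclideanSpace.proj (𝕜 := ℝ) i).integral_comp_comm
      (IsGaussian.integrable_id (μ := multivariateGaussian m R))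
    simpa only [id, EuclideanSpace.coe_proj, integral_id_multivariateGaussian] using h
  covariance_eval := covariance_eval_multivariateGaussian hR

end Moments

lemma IsDensity.hasMeanCov {n : ℕ} {f : EuclideanSpace ℝ (Fin n) → ℝ} (hf : IsDensity f)
    (hmom : Integrable fun x => f x * ‖x‖ ^ 2) :
    HasMeanCov (densityLaw f) (meanVec f) (covMat f) := by
  have hfm := hf.2.1.aemeasurable
  have hmean : ∀ i, ∫ x, x i ∂densityLaw f = meanVec f i := fun i =>
    integral_densityLaw hf.1 hfm _
  refine ⟨?_, hmean, fun i j => ?_⟩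
  · exact (memLp_two_iff_integrable_sq_norm aestronglyMeasurable_id).2
      ((integrable_densityLaw_iff hf.1 hfm).2 hmom)
  · rw [covariance, hmean, hmean, integral_densityLaw hf.1 hfm]
    simp only [covMat, Matrix.of_apply, smul_eq_mul, mul_assoc]

section Growth

variable {E F : Type*} [NormedAddCommGroup E] [NormedAddCommGroup F] {c₁ c₂ : ℝ}

lemma norm_sub_le_of_norm_fderiv_le_affine [NormedSpace ℝ E] [NormedSpace ℝ F] {L : E → F}
    (hL : Differentiable ℝ L) (hc₁ : 0 ≤ c₁) (hbound : ∀ x, ‖fderiv ℝ L x‖ ≤ c₁ * ‖x‖ + c₂)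
    (x : E) : ‖L x - L 0‖ ≤ c₁ * ‖x‖ ^ 2 + c₂ * ‖x‖ := by
  have hball : ∀ y ∈ Metric.closedBall (0 : E) ‖x‖, ‖fderiv ℝ L y‖ ≤ c₁ * ‖x‖ + c₂ :=
    fun y hy => (hbound y).trans <| by
      gcongr
      exact mem_closedBall_zero_iff.1 hy
  calc ‖L x - L 0‖ ≤ (c₁ * ‖x‖ + c₂) * ‖x - 0‖ :=
        (convex_closedBall 0 ‖x‖).norm_image_sub_le_of_norm_fderiv_le (fun y _ => hL y) hball
          (Metric.mem_closedBall_self (norm_nonneg x)) (mem_closedBall_zero_iff.2 le_rfl)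
    _ = c₁ * ‖x‖ ^ 2 + c₂ * ‖x‖ := by
        rw [sub_zero]
        ring

lemma integral_norm_le_sqrt_integral_norm_sq [MeasurableSpace E] {μ : Measure E}
    [IsProbabilityMeasure μ] (hμ : MemLp id 2 μ) :
    ∫ x, ‖x‖ ∂μ ≤ √(∫ x, ‖x‖ ^ 2 ∂μ) := by
  have h := variance_nonneg (fun x => ‖id x‖) μ
  rw [variance_eq_sub hμ.norm, sub_nonneg] at h
  exact le_sqrt_of_sq_le h

lemma integrable_of_norm_sub_le_quadratic [MeasurableSpace E] {μ : Measure E} [IsFiniteMeasure μ]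
    (hμ : MemLp id 2 μ) {L : E → F} (hLm : AEStronglyMeasurable L μ) {a : F}
    (hL : ∀ x, ‖L x - a‖ ≤ c₁ * ‖x‖ ^ 2 + c₂ * ‖x‖) : Integrable L μ := by
  have hbound : Integrable (fun x => c₁ * ‖x‖ ^ 2 + c₂ * ‖x‖) μ :=
    (hμ.norm.integrable_sq.const_mul c₁).add
      ((hμ.norm.integrable one_le_two).const_mul c₂)
  have hsub := hbound.mono' (hLm.sub aestronglyMeasurable_const) (ae_of_all _ hL)
  simpa using hsub.add (integrable_const a)

lemma norm_integral_sub_le_of_norm_sub_le_quadratic [NormedSpace ℝ F] [CompleteSpace F]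
    [MeasurableSpace E] {μ : Measure E} [IsProbabilityMeasure μ] (hμ : MemLp id 2 μ) {L : E → F}
    (hLm : AEStronglyMeasurable L μ) {a : F} (hc₂ : 0 ≤ c₂)
    (hL : ∀ x, ‖L x - a‖ ≤ c₁ * ‖x‖ ^ 2 + c₂ * ‖x‖) :
    ‖∫ x, L x ∂μ - a‖ ≤ c₁ * ∫ x, ‖x‖ ^ 2 ∂μ + c₂ * √(∫ x, ‖x‖ ^ 2 ∂μ) := by
  have hsq : Integrable (fun x => c₁ * ‖x‖ ^ 2) μ := hμ.norm.integrable_sq.const_mul c₁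
  have hlin : Integrable (fun x => c₂ * ‖x‖) μ := (hμ.norm.integrable one_le_two).const_mul c₂
  have hLi := integrable_of_norm_sub_le_quadratic hμ hLm hL
  calc ‖∫ x, L x ∂μ - a‖ = ‖∫ x, (L x - a) ∂μ‖ := by
        rw [integral_sub hLi (integrable_const a), integral_const, probReal_univ, one_smul]
    _ ≤ ∫ x, (c₁ * ‖x‖ ^ 2 + c₂ * ‖x‖) ∂μ :=
        norm_integral_le_of_norm_le (hsq.add hlin) (ae_of_all _ hL)
    _ = c₁ * ∫ x, ‖x‖ ^ 2 ∂μ + c₂ * ∫ x, ‖x‖ ∂μ := by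
        rw [integral_add hsq hlin, integral_const_mul, integral_const_mul]
    _ ≤ c₁ * ∫ x, ‖x‖ ^ 2 ∂μ + c₂ * √(∫ x, ‖x‖ ^ 2 ∂μ) := by
        gcongr
        exact integral_norm_le_sqrt_integral_norm_sq hμ

lemma norm_integral_sub_integral_le_of_norm_sub_le_quadratic [NormedSpace ℝ F] [CompleteSpace F]
    [MeasurableSpace E] {μ ν : Measure E} [IsProbabilityMeasure μ] [IsProbabilityMeasure ν]
    (hμ : MemLp id 2 μ) (hν : MemLp id 2 ν) (hμν : ∫ x, ‖x‖ ^ 2 ∂μ = ∫ x, ‖x‖ ^ 2 ∂ν)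
    {L : E → F} (hLm : StronglyMeasurable L) {a : F} (hc₂ : 0 ≤ c₂)
    (hL : ∀ x, ‖L x - a‖ ≤ c₁ * ‖x‖ ^ 2 + c₂ * ‖x‖) :
    ‖∫ x, L x ∂μ - ∫ x, L x ∂ν‖ ≤
      (c₁ * √(∫ x, ‖x‖ ^ 2 ∂μ) + c₂) * (2 * √(∫ x, ‖x‖ ^ 2 ∂μ)) := by
  have hboundμ := norm_integral_sub_le_of_norm_sub_le_quadratic hμ hLm.aestronglyMeasurable hc₂ hL
  have hboundν := norm_integral_sub_le_of_norm_sub_le_quadratic hν hLm.aestronglyMeasurable hc₂ hL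
  rw [← hμν] at hboundν
  set M := ∫ x, ‖x‖ ^ 2 ∂μ
  have hM : √M * √M = M := mul_self_sqrt (integral_nonneg fun x => sq_nonneg _)
  calc ‖∫ x, L x ∂μ - ∫ x, L x ∂ν‖ ≤ ‖∫ x, L x ∂μ - a‖ + ‖∫ x, L x ∂ν - a‖ := by
        rw [← sub_sub_sub_cancel_right _ _ a]
        exact norm_sub_le _ _
    _ ≤ (c₁ * M + c₂ * √M) + (c₁ * M + c₂ * √M) := add_le_add hboundμ hboundν
    _ = (c₁ * √M + c₂) * (2 * √M) := by linear_combination (-2 * c₁) * hM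

end Growth

lemma IsRegularDensity.abs_log_sub_log_zero_le {n : ℕ} {c₁ c₂ : ℝ}
    {f : EuclideanSpace ℝ (Fin n) → ℝ} (hf : IsRegularDensity c₁ c₂ f) (hc₁ : 0 ≤ c₁)
    (x : EuclideanSpace ℝ (Fin n)) :
    |log (f x) - log (f 0)| ≤ c₁ * ‖x‖ ^ 2 + c₂ * ‖x‖ := by
  refine norm_sub_le_of_norm_fderiv_le_affine (L := fun y => log (f y))
    (hf.2.1.log fun y => (hf.1 y).ne') hc₁ (fun y => ?_) x
  simpa only [gradient, LinearIsometryEquiv.norm_map] using hf.2.2 y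

section GaussianComparison

variable {n : ℕ} {f : EuclideanSpace ℝ (Fin n) → ℝ} {m : Fin n → ℝ}
  {R : Matrix (Fin n) (Fin n) ℝ}

lemma hasMeanCov_gaussDensity (hR : R.PosDef) :
    HasMeanCov (densityLaw (gaussDensity m R)) m R := by
  rw [← multivariateGaussian_eq_densityLaw hR]
  exact hasMeanCov_multivariateGaussian hR.posSemidef

lemma isDensity_gaussDensity (hR : R.PosDef) : IsDensity (gaussDensity m R) := by
  have hg0 : ∀ x, 0 ≤ gaussDensity m R x := fun x => (gaussDensity_pos hR.det_pos x).le
  have hgm : AEMeasurable (gaussDensity m R) := continuous_gaussDensity.aemeasurable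
  have : IsProbabilityMeasure (densityLaw (gaussDensity m R)) :=
    multivariateGaussian_eq_densityLaw (m := m) hR ▸ inferInstance
  refine ⟨hg0, ?_, ?_⟩
  · simpa only [smul_eq_mul, mul_one] using
      (integrable_densityLaw_iff hg0 hgm).1 (integrable_const (1 : ℝ))
  · have h := integral_densityLaw hg0 hgm fun _ => (1 : ℝ)
    simpa only [integral_const, probReal_univ, smul_eq_mul, mul_one] using h.symm

lemma HasMeanCov.integrable_log_gaussDensity {μ : Measure (EuclideanSpace ℝ (Fin n))}
    [IsFiniteMeasure μ] {K : Matrix (Fin n) (Fin n) ℝ} (h : HasMeanCov μ m K) (hR : 0 < R.det) :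
    Integrable (fun x => log (gaussDensity m R x)) μ := by
  simp only [log_gaussDensity hR]
  exact (integrable_const _).sub ((h.integrable_centered_quadratic _).const_mul _)

lemma HasMeanCov.integral_log_gaussDensity {μ : Measure (EuclideanSpace ℝ (Fin n))}
    [IsProbabilityMeasure μ] {K : Matrix (Fin n) (Fin n) ℝ} (h : HasMeanCov μ m K)
    (hR : 0 < R.det) :
    ∫ x, log (gaussDensity m R x) ∂μ =
      log ((2 * π) ^ (-(n : ℝ) / 2) * R.det ^ (-(1 : ℝ) / 2)) -
        1 / 2 * ∑ i, ∑ j, R⁻¹ i j * K i j := by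
  simp only [log_gaussDensity hR]
  rw [integral_sub (integrable_const _) ((h.integrable_centered_quadratic _).const_mul _),
    integral_const, probReal_univ, one_smul, integral_const_mul, h.integral_centered_quadratic]

lemma klDiv'_gaussDensity_le_integral_log_sub_integral_log (hf : IsDensity f)
    (hpos : ∀ x, 0 < f x) (hP : HasMeanCov (densityLaw f) m R) (hR : R.PosDef)
    (hlf : Integrable (fun x => log (f x)) (densityLaw f))
    (hlf' : Integrable (fun x => log (f x)) (densityLaw (gaussDensity m R))) :
    klDiv' f (gaussDensity m R) ≤
      ∫ x, log (f x) ∂densityLaw f - ∫ x, log (f x) ∂densityLaw (gaussDensity m R) := by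
  have hg := isDensity_gaussDensity (m := m) hR
  have hgpos : ∀ x, 0 < gaussDensity m R x := gaussDensity_pos hR.det_pos
  have := isProbabilityMeasure_densityLaw hf.1 hf.2.1 hf.2.2
  have := isProbabilityMeasure_densityLaw hg.1 hg.2.1 hg.2.2
  have hγ : HasMeanCov (densityLaw (gaussDensity m R)) m R := hasMeanCov_gaussDensity hR
  have hgibbs := integral_log_le_integral_log_self hpos hgpos hf.2.1 hg.2.1
    (hf.2.2.trans hg.2.2.symm) hlf' (hγ.integrable_log_gaussDensity hR.det_pos)
  rw [klDiv'_eq_integral_log_sub_integral_log hpos hgpos hf.2.1.aemeasurable hlf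
    (hP.integrable_log_gaussDensity hR.det_pos), hP.integral_log_gaussDensity hR.det_pos,
    ← hγ.integral_log_gaussDensity hR.det_pos]
  exact sub_le_sub_left hgibbs _

end GaussianComparison

theorem stmt3 {n : ℕ} (f : EuclideanSpace ℝ (Fin n) → ℝ) (hdens : IsDensity f)
    (hmom : Integrable fun x : EuclideanSpace ℝ (Fin n) => f x * ‖x‖ ^ 2)
    (c₁ c₂ : ℝ) (hc₁ : 0 < c₁) (hc₂ : 0 ≤ c₂) (hreg : IsRegularDensity c₁ c₂ f) :
    klDiv' f (gaussDensity (meanVec f) (covMat f)) ≤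
      (c₁ * Real.sqrt (∫ x, f x * ‖x‖ ^ 2) + c₂) * (2 * Real.sqrt (∫ x, f x * ‖x‖ ^ 2)) := by
  set γ := densityLaw (gaussDensity (meanVec f) (covMat f))
  have hfm := hdens.2.1.aemeasurable
  have := isProbabilityMeasure_densityLaw hdens.1 hdens.2.1 hdens.2.2
  have := isOpenPosMeasure_densityLaw hreg.1 hfm
  have hP := hdens.hasMeanCov hmom
  have hR : (covMat f).PosDef := hP.posDef
  have hg := isDensity_gaussDensity (m := meanVec f) hR
  have : IsProbabilityMeasure γ := isProbabilityMeasure_densityLaw hg.1 hg.2.1 hg.2.2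
  have hγ : HasMeanCov γ (meanVec f) (covMat f) := hasMeanCov_gaussDensity hR
  have hM : ∫ x, ‖x‖ ^ 2 ∂densityLaw f = ∫ x, f x * ‖x‖ ^ 2 := integral_densityLaw hdens.1 hfm _
  have hMγ := hP.integral_norm_sq.trans hγ.integral_norm_sq.symm
  have hlog := hreg.abs_log_sub_log_zero_le hc₁.le
  have hlogm : StronglyMeasurable fun x => log (f x) :=
    (hreg.2.1.continuous.log fun x => (hreg.1 x).ne').stronglyMeasurable
  have hkl := klDiv'_gaussDensity_le_integral_log_sub_integral_log hdens hreg.1 hP hR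
    (integrable_of_norm_sub_le_quadratic hP.memLp_two_id hlogm.aestronglyMeasurable hlog)
    (integrable_of_norm_sub_le_quadratic hγ.memLp_two_id hlogm.aestronglyMeasurable hlog)
  rw [← hM]
  exact (hkl.trans (le_abs_self _)).trans (norm_integral_sub_integral_le_of_norm_sub_le_quadratic
    hP.memLp_two_id hγ.memLp_two_id hMγ hlogm hc₂ hlog)

end
end

section
/- Let (U, V) be jointly distributed random vectors in ℝ^n (an arbitrary coupling) with finite second moments E[‖U‖²] < ∞ and E[‖V‖²] < ∞, and suppose the marginal density p_V of V is (c1,c2)-regular. Then E[ |log p_V(V) − log p_V(U)| ] ≤ ((c1/2)·√(E[‖U‖²]) + (c1/2)·√(E[‖V‖²]) + c2) · √(E[‖U − V‖²]). -/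
open MeasureTheory Real ProbabilityTheory
open scoped BigOperators ENNReal

noncomputable section
open MeasureTheory Real ProbabilityTheory

/-!
Along the segment from `u` to `v` the bound `c₁‖x‖ + c₂` on the gradient of `log p_V` is convex, so
it stays below the linear interpolation of its endpoint values; integrating it gives
`|log p_V(v) - log p_V(u)| ≤ (c₁/2 (‖u‖ + ‖v‖) + c₂) ‖u - v‖`. Taking expectations and applying
Cauchy–Schwarz to each of the three products finishes the proof.
-/

section MeanValue

variable {E F : Type*} [NormedAddCommGroup E] [NormedSpace ℝ E]
  [NormedAddCommGroup F] [NormedSpace ℝ F]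

lemma norm_image_sub_le_of_norm_deriv_le_affine_segment_01 {f f' : ℝ → F} {a b : ℝ}
    (hf : ∀ t ∈ Set.Icc (0 : ℝ) 1, HasDerivWithinAt f (f' t) (Set.Icc 0 1) t)
    (bound : ∀ t ∈ Set.Ico (0 : ℝ) 1, ‖f' t‖ ≤ (1 - t) * a + t * b) :
    ‖f 1 - f 0‖ ≤ (a + b) / 2 := by
  have hright : ∀ t ∈ Set.Ico (0 : ℝ) 1,
      HasDerivWithinAt (fun s => f s - f 0) (f' t) (Set.Ici t) t := fun t ht =>
    ((hf t (Set.Ico_subset_Icc_self ht)).mono_of_mem_nhdsWithin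
      (Icc_mem_nhdsGE_of_mem ht)).sub_const _
  have hprimitive : ∀ t : ℝ,
      HasDerivAt (fun s => a * s + (b - a) / 2 * s ^ 2) ((1 - t) * a + t * b) t := fun t =>
    (((hasDerivAt_id t).const_mul a).add
      ((hasDerivAt_pow 2 t).const_mul ((b - a) / 2))).congr_deriv (by push_cast; ring)
  calc ‖f 1 - f 0‖ ≤ a * 1 + (b - a) / 2 * 1 ^ 2 :=
        image_norm_le_of_norm_deriv_right_le_deriv_boundary
          (fun t ht => (hf t ht).continuousWithinAt.sub continuousWithinAt_const)
          hright (by simp) hprimitive bound (Set.right_mem_Icc.2 zero_le_one)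
    _ = (a + b) / 2 := by ring

lemma norm_image_sub_le_of_norm_hasFDerivWithin_le_convexOn {s : Set E} {f : E → F}
    {f' : E → E →L[ℝ] F} {φ : E → ℝ} (hf : ∀ x ∈ s, HasFDerivWithinAt f (f' x) s x)
    (hφ : ConvexOn ℝ s φ) (bound : ∀ x ∈ s, ‖f' x‖ ≤ φ x) {x y : E} (hx : x ∈ s) (hy : y ∈ s) :
    ‖f y - f x‖ ≤ (φ x + φ y) / 2 * ‖y - x‖ := by
  let γ : ℝ →ᵃ[ℝ] E := AffineMap.lineMap x y
  have hγ : Set.MapsTo γ (Set.Icc 0 1) s := hφ.1.mapsTo_lineMap hx hy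
  have hderiv : ∀ t ∈ Set.Icc (0 : ℝ) 1,
      HasDerivWithinAt (f ∘ γ) (f' (γ t) (y - x)) (Set.Icc 0 1) t := fun t ht =>
    (hf _ (hγ ht)).comp_hasDerivWithinAt t AffineMap.hasDerivWithinAt_lineMap hγ
  have hderiv_le : ∀ t ∈ Set.Ico (0 : ℝ) 1, ‖f' (γ t) (y - x)‖ ≤
      (1 - t) * (φ x * ‖y - x‖) + t * (φ y * ‖y - x‖) := fun t ht => by
    have hφγ : φ (γ t) ≤ (1 - t) * φ x + t * φ y := by
      simpa only [γ, AffineMap.lineMap_apply_module, smul_eq_mul] using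
        hφ.2 hx hy (sub_nonneg.2 ht.2.le) ht.1 (sub_add_cancel 1 t)
    calc ‖f' (γ t) (y - x)‖ ≤ φ (γ t) * ‖y - x‖ :=
          (f' (γ t)).le_of_opNorm_le (bound _ (hγ (Set.Ico_subset_Icc_self ht))) _
      _ ≤ ((1 - t) * φ x + t * φ y) * ‖y - x‖ := by gcongr
      _ = (1 - t) * (φ x * ‖y - x‖) + t * (φ y * ‖y - x‖) := by ring
  calc ‖f y - f x‖ = ‖(f ∘ γ) 1 - (f ∘ γ) 0‖ := by simp [γ]
    _ ≤ (φ x * ‖y - x‖ + φ y * ‖y - x‖) / 2 :=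
        norm_image_sub_le_of_norm_deriv_le_affine_segment_01 hderiv hderiv_le
    _ = (φ x + φ y) / 2 * ‖y - x‖ := by ring

lemma norm_image_sub_le_of_norm_fderiv_le_affine_norm {g : E → F} {c₁ c₂ : ℝ} (hc₁ : 0 ≤ c₁)
    (hg : Differentiable ℝ g) (bound : ∀ x, ‖fderiv ℝ g x‖ ≤ c₁ * ‖x‖ + c₂) (x y : E) :
    ‖g y - g x‖ ≤ (c₁ / 2 * (‖x‖ + ‖y‖) + c₂) * ‖x - y‖ := by
  have hconvex : ConvexOn ℝ Set.univ fun z : E => c₁ * ‖z‖ + c₂ :=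
    (convexOn_univ_norm.smul hc₁).add_const c₂
  calc ‖g y - g x‖ ≤ ((c₁ * ‖x‖ + c₂) + (c₁ * ‖y‖ + c₂)) / 2 * ‖y - x‖ :=
        norm_image_sub_le_of_norm_hasFDerivWithin_le_convexOn
          (fun z _ => (hg z).hasFDerivAt.hasFDerivWithinAt) hconvex (fun z _ => bound z)
          (Set.mem_univ x) (Set.mem_univ y)
    _ = (c₁ / 2 * (‖x‖ + ‖y‖) + c₂) * ‖x - y‖ := by rw [norm_sub_rev y x]; ring

end MeanValue

section SecondMoment

variable {Ω : Type*} [MeasurableSpace Ω] {P : Measure Ω} {E F G : Type*}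
  [NormedAddCommGroup E] [NormedAddCommGroup F] [NormedAddCommGroup G]

lemma integral_norm_mul_norm_le_sqrt_mul_sqrt {X : Ω → E} {Y : Ω → F}
    (hX : MemLp X 2 P) (hY : MemLp Y 2 P) :
    ∫ ω, ‖X ω‖ * ‖Y ω‖ ∂P ≤ √(∫ ω, ‖X ω‖ ^ 2 ∂P) * √(∫ ω, ‖Y ω‖ ^ 2 ∂P) := by
  simpa [Real.sqrt_eq_rpow] using
    integral_mul_norm_le_Lp_mul_Lq (f := fun ω => ‖X ω‖) (g := fun ω => ‖Y ω‖)
      Real.HolderConjugate.two_two (by simpa using hX.norm) (by simpa using hY.norm)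

lemma integral_norm_le_sqrt_integral_norm_sq_s7 [IsProbabilityMeasure P] {X : Ω → E}
    (hX : MemLp X 2 P) : ∫ ω, ‖X ω‖ ∂P ≤ √(∫ ω, ‖X ω‖ ^ 2 ∂P) := by
  simpa using integral_norm_mul_norm_le_sqrt_mul_sqrt (memLp_const (1 : ℝ)) hX

lemma integrable_affine_norm_mul_norm [IsFiniteMeasure P] {X : Ω → E} {Y : Ω → F} {Z : Ω → G}
    (hX : MemLp X 2 P) (hY : MemLp Y 2 P) (hZ : MemLp Z 2 P) (a b : ℝ) :
    Integrable (fun ω => (a * (‖X ω‖ + ‖Y ω‖) + b) * ‖Z ω‖) P :=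
  (((hX.norm.add hY.norm).const_mul a).add (memLp_const b)).integrable_mul hZ.norm

lemma integral_affine_norm_mul_norm_le [IsProbabilityMeasure P] {X : Ω → E} {Y : Ω → F}
    {Z : Ω → G} (hX : MemLp X 2 P) (hY : MemLp Y 2 P) (hZ : MemLp Z 2 P) {a b : ℝ}
    (ha : 0 ≤ a) (hb : 0 ≤ b) :
    ∫ ω, (a * (‖X ω‖ + ‖Y ω‖) + b) * ‖Z ω‖ ∂P ≤
      (a * √(∫ ω, ‖X ω‖ ^ 2 ∂P) + a * √(∫ ω, ‖Y ω‖ ^ 2 ∂P) + b) * √(∫ ω, ‖Z ω‖ ^ 2 ∂P) := by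
  have hXZ : Integrable (fun ω => a * (‖X ω‖ * ‖Z ω‖)) P :=
    (hX.norm.integrable_mul hZ.norm).const_mul a
  have hYZ : Integrable (fun ω => a * (‖Y ω‖ * ‖Z ω‖)) P :=
    (hY.norm.integrable_mul hZ.norm).const_mul a
  have hbZ : Integrable (fun ω => b * ‖Z ω‖) P := (hZ.integrable one_le_two).norm.const_mul b
  calc ∫ ω, (a * (‖X ω‖ + ‖Y ω‖) + b) * ‖Z ω‖ ∂P
      = ∫ ω, a * (‖X ω‖ * ‖Z ω‖) + a * (‖Y ω‖ * ‖Z ω‖) + b * ‖Z ω‖ ∂P := by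
        congr with ω; ring
    _ = a * ∫ ω, ‖X ω‖ * ‖Z ω‖ ∂P + a * ∫ ω, ‖Y ω‖ * ‖Z ω‖ ∂P + b * ∫ ω, ‖Z ω‖ ∂P := by
        rw [integral_add (hXZ.fun_add hYZ) hbZ, integral_add hXZ hYZ, integral_const_mul,
          integral_const_mul, integral_const_mul]
    _ ≤ a * (√(∫ ω, ‖X ω‖ ^ 2 ∂P) * √(∫ ω, ‖Z ω‖ ^ 2 ∂P)) +
          a * (√(∫ ω, ‖Y ω‖ ^ 2 ∂P) * √(∫ ω, ‖Z ω‖ ^ 2 ∂P)) + b * √(∫ ω, ‖Z ω‖ ^ 2 ∂P) := by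
        gcongr
        · exact integral_norm_mul_norm_le_sqrt_mul_sqrt hX hZ
        · exact integral_norm_mul_norm_le_sqrt_mul_sqrt hY hZ
        · exact integral_norm_le_sqrt_integral_norm_sq_s7 hZ
    _ = _ := by ring

end SecondMoment

namespace IsRegularDensity

variable {n : ℕ} {c₁ c₂ : ℝ} {f : EuclideanSpace ℝ (Fin n) → ℝ}

lemma differentiable_log (hf : IsRegularDensity c₁ c₂ f) :
    Differentiable ℝ fun x => Real.log (f x) :=
  hf.2.1.log fun x => (hf.1 x).ne'

lemma norm_fderiv_log_le (hf : IsRegularDensity c₁ c₂ f) (x : EuclideanSpace ℝ (Fin n)) :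
    ‖fderiv ℝ (fun y => Real.log (f y)) x‖ ≤ c₁ * ‖x‖ + c₂ := by
  simpa only [gradient, LinearIsometryEquiv.norm_map] using hf.2.2 x

end IsRegularDensity

theorem stmt7_general {Ω : Type*} [MeasurableSpace Ω] {P : Measure Ω} [IsProbabilityMeasure P]
    {E F : Type*} [NormedAddCommGroup E] [NormedSpace ℝ E] [NormedAddCommGroup F]
    [NormedSpace ℝ F] {U V : Ω → E} (hU : MemLp U 2 P) (hV : MemLp V 2 P) {g : E → F}
    {c₁ c₂ : ℝ} (hc₁ : 0 ≤ c₁) (hg : Differentiable ℝ g)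
    (bound : ∀ x, ‖fderiv ℝ g x‖ ≤ c₁ * ‖x‖ + c₂) :
    Integrable (fun ω => g (V ω) - g (U ω)) P ∧
      ∫ ω, ‖g (V ω) - g (U ω)‖ ∂P ≤
        (c₁ / 2 * √(∫ ω, ‖U ω‖ ^ 2 ∂P) + c₁ / 2 * √(∫ ω, ‖V ω‖ ^ 2 ∂P) + c₂)
          * √(∫ ω, ‖U ω - V ω‖ ^ 2 ∂P) := by
  have hc₂ : 0 ≤ c₂ := by simpa using (norm_nonneg _).trans (bound 0)
  have hUV : MemLp (fun ω => U ω - V ω) 2 P := hU.sub hV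
  have hmajorant := integrable_affine_norm_mul_norm hU hV hUV (c₁ / 2) c₂
  have hpointwise : ∀ ω, ‖g (V ω) - g (U ω)‖ ≤
      (c₁ / 2 * (‖U ω‖ + ‖V ω‖) + c₂) * ‖U ω - V ω‖ := fun ω =>
    norm_image_sub_le_of_norm_fderiv_le_affine_norm hc₁ hg bound (U ω) (V ω)
  have hint : Integrable (fun ω => g (V ω) - g (U ω)) P :=
    hmajorant.mono' ((hg.continuous.comp_aestronglyMeasurable hV.1).sub
      (hg.continuous.comp_aestronglyMeasurable hU.1)) (.of_forall hpointwise)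
  exact ⟨hint, (integral_mono hint.norm hmajorant hpointwise).trans
    (integral_affine_norm_mul_norm_le hU hV hUV (by positivity) hc₂)⟩

theorem stmt7 {Ω : Type*} [MeasurableSpace Ω] (P : Measure Ω) [IsProbabilityMeasure P]
    {n : ℕ} (U V : Ω → EuclideanSpace ℝ (Fin n)) (hU : Measurable U) (hV : Measurable V)
    (hU2 : Integrable (fun ω => ‖U ω‖ ^ 2) P) (hV2 : Integrable (fun ω => ‖V ω‖ ^ 2) P)
    (pV : EuclideanSpace ℝ (Fin n) → ℝ)
    (hlawV : Measure.map V P = volume.withDensity fun x => ENNReal.ofReal (pV x))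
    (c₁ c₂ : ℝ) (hc₁ : 0 < c₁) (hc₂ : 0 ≤ c₂) (hreg : IsRegularDensity c₁ c₂ pV) :
    ∫ ω, |Real.log (pV (V ω)) - Real.log (pV (U ω))| ∂P ≤
      (c₁ / 2 * Real.sqrt (∫ ω, ‖U ω‖ ^ 2 ∂P) + c₁ / 2 * Real.sqrt (∫ ω, ‖V ω‖ ^ 2 ∂P) + c₂)
        * Real.sqrt (∫ ω, ‖U ω - V ω‖ ^ 2 ∂P) :=
  (stmt7_general ((memLp_two_iff_integrable_sq_norm hU.aestronglyMeasurable).2 hU2)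
    ((memLp_two_iff_integrable_sq_norm hV.aestronglyMeasurable).2 hV2)
    hc₁.le hreg.differentiable_log hreg.norm_fderiv_log_le).2

end
end

section
/- Let f be a (c1,c2)-regular probability density on ℝ^n whose maximum is attained at the origin, i.e. f(x) ≤ f(0) for all x ∈ ℝ^n. Then for all x ∈ ℝ^n, f(x) ≥ f(0)·exp(−((c1/2)·‖x‖² + c2·‖x‖)). -/
open MeasureTheory Real ProbabilityTheory
open scoped BigOperators ENNReal

noncomputable section
open MeasureTheory Real ProbabilityTheory

/-!
At the point `t • x` of the segment from `0` to `x`, the speed of `t ↦ log f (t • x)` is at most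
`(c₁ t‖x‖ + c₂)‖x‖`, the derivative in `t` of `c₁ / 2 (t‖x‖)² + c₂ t‖x‖`. Hence `log f` changes by
at most `c₁ / 2 ‖x‖² + c₂ ‖x‖` between `0` and `x`, and exponentiating gives the lower bound.
-/

theorem norm_gradient_eq_norm_fderiv {𝕜 H : Type*} [RCLike 𝕜] [NormedAddCommGroup H]
    [InnerProductSpace 𝕜 H] [CompleteSpace H] (h : H → 𝕜) (x : H) :
    ‖gradient h x‖ = ‖fderiv 𝕜 h x‖ :=
  (InnerProductSpace.toDual 𝕜 H).symm.norm_map _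

section GrowthBounds

variable {E F : Type*} [NormedAddCommGroup E] [NormedSpace ℝ E]
  [NormedAddCommGroup F] [NormedSpace ℝ F] {g : E → F} {a : E}

theorem norm_sub_le_of_norm_fderiv_le_radial {B B' : ℝ → ℝ} (hg : Differentiable ℝ g)
    (hB : ∀ r, 0 ≤ r → HasDerivAt B (B' r) r) (bound : ∀ y, ‖fderiv ℝ g y‖ ≤ B' ‖y - a‖) (x : E) :
    ‖g x - g a‖ ≤ B ‖x - a‖ - B 0 := by
  let γ : ℝ → E := AffineMap.lineMap a x
  have hγ (t : ℝ) : HasDerivAt (fun t ↦ g (γ t) - g a) (fderiv ℝ g (γ t) (x - a)) t :=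
    ((hg (γ t)).hasFDerivAt.comp_hasDerivAt t AffineMap.hasDerivAt_lineMap).sub_const (g a)
  have hmajorant (t : ℝ) (ht : 0 ≤ t) :
      HasDerivAt (fun t ↦ B (t * ‖x - a‖) - B 0) (B' (t * ‖x - a‖) * ‖x - a‖) t :=
    ((hB _ (by positivity)).comp t (hasDerivAt_mul_const ‖x - a‖)).sub_const (B 0)
  have hspeed (t : ℝ) (ht : 0 ≤ t) :
      ‖fderiv ℝ g (γ t) (x - a)‖ ≤ B' (t * ‖x - a‖) * ‖x - a‖ := by
    have hdist : ‖γ t - a‖ = t * ‖x - a‖ := by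
      rw [← dist_eq_norm, dist_lineMap_left, Real.norm_of_nonneg ht, dist_eq_norm']
    rw [← hdist]
    exact (fderiv ℝ g (γ t)).le_of_opNorm_le (bound (γ t)) (x - a)
  have hfence := image_norm_le_of_norm_deriv_right_le_deriv_boundary' (a := 0) (b := 1)
    (fun t _ ↦ (hγ t).continuousAt.continuousWithinAt) (fun t _ ↦ (hγ t).hasDerivWithinAt)
    (by simp [γ]) (fun t ht ↦ (hmajorant t ht.1).continuousAt.continuousWithinAt)
    (fun t ht ↦ (hmajorant t ht.1).hasDerivWithinAt) (fun t ht ↦ hspeed t ht.1)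
    (Set.right_mem_Icc.2 zero_le_one)
  simpa [γ] using hfence

theorem norm_sub_le_of_norm_fderiv_le_affine_s9 {c₁ c₂ : ℝ} (hg : Differentiable ℝ g)
    (bound : ∀ y, ‖fderiv ℝ g y‖ ≤ c₁ * ‖y - a‖ + c₂) (x : E) :
    ‖g x - g a‖ ≤ c₁ / 2 * ‖x - a‖ ^ 2 + c₂ * ‖x - a‖ := by
  have hprimitive (r : ℝ) :
      HasDerivAt (fun r ↦ c₁ / 2 * r ^ 2 + c₂ * r) (c₁ * r + c₂) r := by
    refine (((hasDerivAt_pow 2 r).const_mul (c₁ / 2)).fun_add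
      (hasDerivAt_const_mul c₂)).congr_deriv ?_
    ring
  simpa using norm_sub_le_of_norm_fderiv_le_radial hg (fun r _ ↦ hprimitive r) bound x

theorem stmt9_general {f : E → ℝ} {c₁ c₂ : ℝ} (hpos : ∀ x, 0 < f x) (hdiff : Differentiable ℝ f)
    (hlog : ∀ x, ‖fderiv ℝ (fun y ↦ Real.log (f y)) x‖ ≤ c₁ * ‖x‖ + c₂) (x : E) :
    f 0 * Real.exp (-(c₁ / 2 * ‖x‖ ^ 2 + c₂ * ‖x‖)) ≤ f x := by
  have hdist : |Real.log (f x) - Real.log (f 0)| ≤ c₁ / 2 * ‖x‖ ^ 2 + c₂ * ‖x‖ := by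
    simpa using norm_sub_le_of_norm_fderiv_le_affine_s9 (a := 0)
      (hdiff.log fun y ↦ (hpos y).ne') (by simpa using hlog) x
  rw [← Real.exp_log (hpos 0), ← Real.exp_add, ← Real.le_log_iff_exp_le (hpos x)]
  linarith [neg_le_of_abs_le hdist]

end GrowthBounds

theorem stmt9 {n : ℕ} (f : EuclideanSpace ℝ (Fin n) → ℝ) (hdens : IsDensity f)
    (c₁ c₂ : ℝ) (hc₁ : 0 < c₁) (hc₂ : 0 ≤ c₂) (hreg : IsRegularDensity c₁ c₂ f)
    (hmax : ∀ x, f x ≤ f 0) :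
    ∀ x : EuclideanSpace ℝ (Fin n),
      f 0 * Real.exp (-(c₁ / 2 * ‖x‖ ^ 2 + c₂ * ‖x‖)) ≤ f x := by
  exact stmt9_general hreg.1 hreg.2.1 fun x ↦
    (norm_gradient_eq_norm_fderiv _ x).symm.trans_le (hreg.2.2 x)

end
end

section
/- Let Y^n = B^n + Z^n, where B^n is a random vector in ℝ^n with E[‖B^n‖] < ∞ that is independent of Z^n ∼ N(0, σ_Z²·I_n), with I_n the n×n identity matrix and σ_Z² > 0. Then Y^n has an everywhere positive, differentiable density p_Y that is (c1,c2)-regular with c1 = 3/σ_Z² and c2 = (4/σ_Z²)·E[‖B^n‖] (with the natural logarithm). -/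
open MeasureTheory Real ProbabilityTheory
open scoped BigOperators ENNReal

noncomputable section
open MeasureTheory Real ProbabilityTheory

/-!
Let `μ` be the law of `B`, `M = E‖B‖`, and let `φ` be the density of `Z`, so that `B + Z` has
density `p x = ∫ φ (x - b) dμ b`. For a Gaussian, `‖∇φ u‖ = σ⁻² ‖u‖ φ u`; differentiating under the
integral,
`σ² ‖∇p x‖ ≤ ∫ ‖x - b‖ φ (x - b) dμ b ≤ ‖x‖ p x + ∫ ‖b‖ φ (x - b) dμ b`,
and everything reduces to `∫ ‖b‖ φ (x - b) dμ b ≤ (2‖x‖ + 4M) p x`. This uses only that `φ` is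
radially nonincreasing. Let `c` be the value of `φ` on the sphere of radius `‖x‖ + 2M`. If
`‖b‖ > 2‖x‖ + 2M` then `φ (x - b) ≤ c`, so the excess of `‖b‖` over `2‖x‖ + 2M` contributes at most
`cM`; if `‖b‖ ≤ 2M`, which by Markov's inequality has probability at least `1/2`, then
`φ (x - b) ≥ c`, so `cM ≤ 2M p x`.
-/

section Convolution

/-- The convolution of the measure `μ` with the function `φ`: the density of `B + Z` when `B` has
law `μ` and `Z` is independent of `B` with density `φ`. -/
def convDensity {G : Type*} [Sub G] [MeasurableSpace G] (μ : Measure G) (φ : G → ℝ) (x : G) : ℝ :=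
  ∫ b, φ (x - b) ∂μ

theorem conv_withDensity {G : Type*} [AddCommGroup G] [MeasurableSpace G] [MeasurableAdd₂ G]
    [MeasurableNeg G] {μ ν : Measure G} [SFinite μ] [SFinite ν] [ν.IsAddLeftInvariant]
    {g : G → ℝ≥0∞} (hg : Measurable g) :
    μ ∗ ν.withDensity g = ν.withDensity fun x => ∫⁻ b, g (x - b) ∂μ := by
  have hg' : Measurable fun p : G × G => g (p.1 - p.2) := by fun_prop
  refine Measure.ext_of_lintegral _ fun f hf => ?_
  calc ∫⁻ x, f x ∂(μ ∗ ν.withDensity g)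
      = ∫⁻ b, ∫⁻ z, f (b + z) ∂ν.withDensity g ∂μ := Measure.lintegral_conv hf
    _ = ∫⁻ b, ∫⁻ z, g z * f (b + z) ∂ν ∂μ := by
        refine lintegral_congr fun b => ?_
        rw [lintegral_withDensity_eq_lintegral_mul _ hg (by fun_prop)]
        rfl
    _ = ∫⁻ b, ∫⁻ x, g (x - b) * f x ∂ν ∂μ := by
        refine lintegral_congr fun b => ?_
        rw [← lintegral_add_left_eq_self (fun x => g (x - b) * f x) b]
        simp only [add_sub_cancel_left]
    _ = ∫⁻ x, ∫⁻ b, g (x - b) * f x ∂μ ∂ν := lintegral_lintegral_swap (by fun_prop)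
    _ = ∫⁻ x, (∫⁻ b, g (x - b) ∂μ) * f x ∂ν :=
        lintegral_congr fun x => lintegral_mul_const _ (by fun_prop)
    _ = ∫⁻ x, f x ∂ν.withDensity fun x => ∫⁻ b, g (x - b) ∂μ := by
        rw [lintegral_withDensity_eq_lintegral_mul _ hg'.lintegral_prod_right' hf]
        rfl

theorem conv_withDensity_ofReal {G : Type*} [AddCommGroup G] [MeasurableSpace G]
    [MeasurableAdd₂ G] [MeasurableNeg G] {μ ν : Measure G} [SFinite μ] [SFinite ν]
    [ν.IsAddLeftInvariant] {φ : G → ℝ} (hφ : Measurable φ) (hφ₀ : ∀ u, 0 ≤ φ u)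
    (hint : ∀ x, Integrable (fun b => φ (x - b)) μ) :
    μ ∗ ν.withDensity (fun u => ENNReal.ofReal (φ u))
      = ν.withDensity fun x => ENNReal.ofReal (convDensity μ φ x) := by
  rw [conv_withDensity hφ.ennreal_ofReal]
  congr with x
  exact (ofReal_integral_eq_lintegral_ofReal (hint x) (.of_forall fun b => hφ₀ (x - b))).symm

theorem convDensity_pos {G : Type*} [Sub G] [MeasurableSpace G] {μ : Measure G} [NeZero μ]
    {φ : G → ℝ} (hφ : ∀ u, 0 < φ u) {x : G} (hint : Integrable (fun b => φ (x - b)) μ) :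
    0 < convDensity μ φ x := by
  have hsupp : (Function.support fun b => φ (x - b)) = Set.univ :=
    Function.support_eq_univ fun b => (hφ (x - b)).ne'
  rw [convDensity, integral_pos_iff_support_of_nonneg (fun b => (hφ (x - b)).le) hint, hsupp]
  exact NeZero.pos _

variable {E : Type*} [NormedAddCommGroup E] [NormedSpace ℝ E] [FiniteDimensional ℝ E]
  [MeasurableSpace E] [BorelSpace E] {μ : Measure E} [IsFiniteMeasure μ] {φ : E → ℝ}

theorem hasFDerivAt_convDensity (hμ : Integrable (fun b => ‖b‖) μ) (hφ : Differentiable ℝ φ)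
    {a d : ℝ} (ha : 0 ≤ a) (hφ' : ∀ u, ‖fderiv ℝ φ u‖ ≤ a * ‖u‖ + d) {x : E}
    (hint : Integrable (fun b => φ (x - b)) μ) :
    HasFDerivAt (convDensity μ φ) (∫ b, fderiv ℝ φ (x - b) ∂μ) x := by
  have hbound : ∀ b, ∀ y ∈ Metric.ball x 1,
      ‖fderiv ℝ φ (y - b)‖ ≤ a * ((‖x‖ + 1) + ‖b‖) + d := fun b y hy => by
    have hyx : ‖y‖ ≤ ‖x‖ + 1 := (norm_lt_of_mem_ball hy).le
    calc ‖fderiv ℝ φ (y - b)‖ ≤ a * ‖y - b‖ + d := hφ' _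
      _ ≤ a * ((‖x‖ + 1) + ‖b‖) + d := by
        gcongr
        exact (norm_sub_le y b).trans (by gcongr)
  refine hasFDerivAt_integral_of_dominated_of_fderiv_le
    (F' := fun y b => fderiv ℝ φ (y - b)) (bound := fun b => a * ((‖x‖ + 1) + ‖b‖) + d)
    (Metric.ball_mem_nhds x one_pos) (.of_forall fun y => ?_) hint ?_ (.of_forall hbound) ?_
    (.of_forall fun b y _ => ?_)
  · exact (hφ.continuous.comp (continuous_const.sub continuous_id)).aestronglyMeasurable
  · exact ((measurable_fderiv ℝ φ).comp (measurable_id.const_sub x)).aestronglyMeasurable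
  · exact (((integrable_const _).add hμ).const_mul a).add (integrable_const d)
  · exact (hasFDerivAt_comp_sub b).2 (hφ (y - b)).hasFDerivAt

end Convolution

/-- A function on a normed space is radially nonincreasing if it is nonincreasing in the norm of its
argument. In particular it depends on the norm only. -/
def RadiallyAntitone {E : Type*} [Norm E] (φ : E → ℝ) : Prop :=
  ∀ ⦃u v : E⦄, ‖u‖ ≤ ‖v‖ → φ v ≤ φ u

namespace RadiallyAntitone

variable {E : Type*} [NormedAddCommGroup E] {φ : E → ℝ}

theorem le_apply_zero (hφ : RadiallyAntitone φ) (u : E) : φ u ≤ φ 0 :=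
  hφ (by simp)

section Pointwise

variable [NormedSpace ℝ E]

theorem exists_threshold (hφ : RadiallyAntitone φ) (hφ₀ : ∀ u, 0 ≤ φ u) {r : ℝ} (hr : 0 ≤ r) :
    ∃ c, 0 ≤ c ∧ (∀ u, r ≤ ‖u‖ → φ u ≤ c) ∧ ∀ u, ‖u‖ ≤ r → c ≤ φ u := by
  rcases subsingleton_or_nontrivial E with hE | hE
  · exact ⟨φ 0, hφ₀ 0, fun u _ => hφ.le_apply_zero u, fun u _ => hφ (by simp [hE.elim u 0])⟩
  · obtain ⟨v, rfl⟩ := exists_norm_eq E hr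
    exact ⟨φ v, hφ₀ v, fun _ h => hφ h, fun _ h => hφ h⟩

theorem exists_norm_sub_mul_le (hφ : RadiallyAntitone φ) (hφ₀ : ∀ u, 0 ≤ φ u) {M : ℝ}
    (hM : 0 ≤ M) (x : E) :
    ∃ c, ∀ b, (‖b‖ - (2 * ‖x‖ + 4 * M)) * φ (x - b) ≤ 2 * c * (‖b‖ - M) := by
  obtain ⟨c, hc, hfar, hnear⟩ := hφ.exists_threshold hφ₀ (r := ‖x‖ + 2 * M) (by positivity)
  refine ⟨c, fun b => ?_⟩
  have htail : (‖b‖ - (2 * ‖x‖ + 2 * M)) * φ (x - b) ≤ c * ‖b‖ := by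
    rcases le_total ‖b‖ (2 * ‖x‖ + 2 * M) with hb | hb
    · exact (mul_nonpos_of_nonpos_of_nonneg (by linarith) (hφ₀ _)).trans (by positivity)
    · have hφc : φ (x - b) ≤ c := hfar _ (by linarith [norm_sub_norm_le b x, norm_sub_rev b x])
      calc (‖b‖ - (2 * ‖x‖ + 2 * M)) * φ (x - b)
          ≤ ‖b‖ * c := mul_le_mul (by linarith [norm_nonneg x]) hφc (hφ₀ _) (norm_nonneg b)
        _ = c * ‖b‖ := mul_comm _ _
  have hbulk : c * (2 * M - ‖b‖) ≤ 2 * M * φ (x - b) := by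
    rcases le_total ‖b‖ (2 * M) with hb | hb
    · have hcφ : c ≤ φ (x - b) := hnear _ (by linarith [norm_sub_le x b])
      calc c * (2 * M - ‖b‖)
          ≤ φ (x - b) * (2 * M) :=
            mul_le_mul hcφ (by linarith [norm_nonneg b]) (by linarith) (hφ₀ _)
        _ = 2 * M * φ (x - b) := mul_comm _ _
    · exact (mul_nonpos_of_nonneg_of_nonpos hc (by linarith)).trans
        (mul_nonneg (by linarith) (hφ₀ _))
  linarith

end Pointwise

variable [MeasurableSpace E] [BorelSpace E] {μ : Measure E}

theorem integrable_sub [IsFiniteMeasure μ] (hφ : RadiallyAntitone φ) (hφ₀ : ∀ u, 0 ≤ φ u)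
    (hφm : Measurable φ) (x : E) : Integrable (fun b => φ (x - b)) μ := by
  refine .of_bound (hφm.comp (measurable_id.const_sub x)).aestronglyMeasurable (φ 0)
    (.of_forall fun b => ?_)
  rw [Real.norm_of_nonneg (hφ₀ _)]
  exact hφ.le_apply_zero _

theorem integrable_norm_mul_sub (hφ : RadiallyAntitone φ) (hφ₀ : ∀ u, 0 ≤ φ u)
    (hφm : Measurable φ) (hμ : Integrable (fun b => ‖b‖) μ) (x : E) :
    Integrable (fun b => ‖b‖ * φ (x - b)) μ := by
  refine hμ.mul_bdd (c := φ 0) (hφm.comp (measurable_id.const_sub x)).aestronglyMeasurable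
    (.of_forall fun b => ?_)
  rw [Real.norm_of_nonneg (hφ₀ _)]
  exact hφ.le_apply_zero _

variable [NormedSpace ℝ E] [IsProbabilityMeasure μ]

theorem integral_norm_mul_sub_le (hφ : RadiallyAntitone φ) (hφ₀ : ∀ u, 0 ≤ φ u)
    (hφm : Measurable φ) (hμ : Integrable (fun b => ‖b‖) μ) (x : E) :
    ∫ b, ‖b‖ * φ (x - b) ∂μ ≤ (2 * ‖x‖ + 4 * ∫ b, ‖b‖ ∂μ) * convDensity μ φ x := by
  set M := ∫ b, ‖b‖ ∂μ with hM
  obtain ⟨c, hc⟩ := hφ.exists_norm_sub_mul_le hφ₀ (M := M)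
    (integral_nonneg fun b => norm_nonneg b) x
  have hint := (hφ.integrable_sub (μ := μ) hφ₀ hφm x).const_mul (2 * ‖x‖ + 4 * M)
  have hintb := hφ.integrable_norm_mul_sub hφ₀ hφm hμ x
  rw [← sub_nonpos, convDensity, ← integral_const_mul, ← integral_sub hintb hint]
  calc ∫ b, ‖b‖ * φ (x - b) - (2 * ‖x‖ + 4 * M) * φ (x - b) ∂μ
      ≤ ∫ b, 2 * c * (‖b‖ - M) ∂μ := by
        refine integral_mono (hintb.sub hint) ((hμ.sub (integrable_const M)).const_mul _)
          fun b => ?_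
        simpa only [sub_mul] using hc b
    _ = 0 := by
        rw [integral_const_mul, integral_sub hμ (integrable_const M), integral_const,
          probReal_univ, one_smul, ← hM, sub_self, mul_zero]

theorem norm_integral_fderiv_sub_le (hφ : RadiallyAntitone φ) (hφ₀ : ∀ u, 0 ≤ φ u)
    (hφm : Measurable φ) {c₁ c₂ : ℝ} (hc₁ : 0 ≤ c₁)
    (hφ' : ∀ u, ‖fderiv ℝ φ u‖ ≤ (c₁ * ‖u‖ + c₂) * φ u) (hμ : Integrable (fun b => ‖b‖) μ) (x : E) :
    ‖∫ b, fderiv ℝ φ (x - b) ∂μ‖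
      ≤ (3 * c₁ * ‖x‖ + (4 * c₁ * (∫ b, ‖b‖ ∂μ) + c₂)) * convDensity μ φ x := by
  have hint := (hφ.integrable_sub (μ := μ) hφ₀ hφm x).const_mul (c₁ * ‖x‖ + c₂)
  have hintb := (hφ.integrable_norm_mul_sub hφ₀ hφm hμ x).const_mul c₁
  calc ‖∫ b, fderiv ℝ φ (x - b) ∂μ‖
      ≤ ∫ b, (c₁ * ‖x‖ + c₂) * φ (x - b) + c₁ * (‖b‖ * φ (x - b)) ∂μ := by
        refine norm_integral_le_of_norm_le (hint.add hintb) (.of_forall fun b => ?_)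
        calc ‖fderiv ℝ φ (x - b)‖ ≤ (c₁ * ‖x - b‖ + c₂) * φ (x - b) := hφ' _
          _ ≤ (c₁ * (‖x‖ + ‖b‖) + c₂) * φ (x - b) := by
            gcongr
            · exact hφ₀ _
            · exact norm_sub_le x b
          _ = (c₁ * ‖x‖ + c₂) * φ (x - b) + c₁ * (‖b‖ * φ (x - b)) := by ring
    _ = (c₁ * ‖x‖ + c₂) * convDensity μ φ x + c₁ * ∫ b, ‖b‖ * φ (x - b) ∂μ := by
        rw [integral_add hint hintb, integral_const_mul, integral_const_mul, convDensity]
    _ ≤ (c₁ * ‖x‖ + c₂) * convDensity μ φ x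
          + c₁ * ((2 * ‖x‖ + 4 * ∫ b, ‖b‖ ∂μ) * convDensity μ φ x) := by
        gcongr
        exact hφ.integral_norm_mul_sub_le hφ₀ hφm hμ x
    _ = (3 * c₁ * ‖x‖ + (4 * c₁ * (∫ b, ‖b‖ ∂μ) + c₂)) * convDensity μ φ x := by ring

end RadiallyAntitone

theorem norm_gradient_log {E : Type*} [NormedAddCommGroup E] [InnerProductSpace ℝ E]
    [CompleteSpace E] {f : E → ℝ} {x : E} (hf : DifferentiableAt ℝ f x) (hx : 0 < f x) :
    ‖gradient (fun y => Real.log (f y)) x‖ = ‖fderiv ℝ f x‖ / f x := by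
  rw [gradient, LinearIsometryEquiv.norm_map, fderiv.log hf hx.ne', norm_smul, norm_inv,
    Real.norm_of_nonneg hx.le, inv_mul_eq_div]

theorem isRegularDensity_iff_norm_fderiv_le {n : ℕ} {c₁ c₂ : ℝ} {f : EuclideanSpace ℝ (Fin n) → ℝ} :
    IsRegularDensity c₁ c₂ f ↔ (∀ x, 0 < f x) ∧ Differentiable ℝ f ∧
      ∀ x, ‖fderiv ℝ f x‖ ≤ (c₁ * ‖x‖ + c₂) * f x := by
  refine and_congr_right fun hpos => and_congr_right fun hdiff => forall_congr' fun x => ?_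
  rw [norm_gradient_log (hdiff x) (hpos x), div_le_iff₀ (hpos x)]

theorem IsRegularDensity.norm_fderiv_le_of_radiallyAntitone {n : ℕ} {c₁ c₂ : ℝ}
    {φ : EuclideanSpace ℝ (Fin n) → ℝ} (hφ : IsRegularDensity c₁ c₂ φ) (hanti : RadiallyAntitone φ)
    (hc₁ : 0 ≤ c₁) (u : EuclideanSpace ℝ (Fin n)) :
    ‖fderiv ℝ φ u‖ ≤ c₁ * φ 0 * ‖u‖ + c₂ * φ 0 := by
  have hc₂ : 0 ≤ c₂ := by simpa using (norm_nonneg _).trans (hφ.2.2 0)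
  calc ‖fderiv ℝ φ u‖ ≤ (c₁ * ‖u‖ + c₂) * φ u := (isRegularDensity_iff_norm_fderiv_le.1 hφ).2.2 u
    _ ≤ (c₁ * ‖u‖ + c₂) * φ 0 := by
      gcongr
      exact hanti.le_apply_zero u
    _ = c₁ * φ 0 * ‖u‖ + c₂ * φ 0 := by ring

theorem IsRegularDensity.convDensity {n : ℕ} {μ : Measure (EuclideanSpace ℝ (Fin n))}
    [IsProbabilityMeasure μ] (hμ : Integrable (fun b => ‖b‖) μ)
    {φ : EuclideanSpace ℝ (Fin n) → ℝ} {c₁ c₂ : ℝ} (hφ : IsRegularDensity c₁ c₂ φ)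
    (hanti : RadiallyAntitone φ) (hc₁ : 0 ≤ c₁) :
    IsRegularDensity (3 * c₁) (4 * c₁ * (∫ b, ‖b‖ ∂μ) + c₂) (convDensity μ φ) := by
  obtain ⟨hpos, hdiff, hlog⟩ := isRegularDensity_iff_norm_fderiv_le.1 hφ
  have hφ₀ : ∀ u, 0 ≤ φ u := fun u => (hpos u).le
  have hint := hanti.integrable_sub (μ := μ) hφ₀ hdiff.continuous.measurable
  have hderiv := fun x => hasFDerivAt_convDensity hμ hdiff (mul_nonneg hc₁ (hφ₀ 0))
    (hφ.norm_fderiv_le_of_radiallyAntitone hanti hc₁) (hint x)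
  refine isRegularDensity_iff_norm_fderiv_le.2
    ⟨fun x => convDensity_pos hpos (hint x), fun x => (hderiv x).differentiableAt, fun x => ?_⟩
  rw [(hderiv x).fderiv]
  exact hanti.norm_integral_fderiv_sub_le hφ₀ hdiff.continuous.measurable hc₁ hlog hμ x

section Gaussian

variable (n : ℕ) {v : ℝ}

theorem radiallyAntitone_isoGaussDensity (hv : 0 < v) : RadiallyAntitone (isoGaussDensity n v) := by
  intro x y hxy
  unfold isoGaussDensity
  gcongr

theorem log_isoGaussDensity (hv : 0 < v) (x : EuclideanSpace ℝ (Fin n)) :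
    Real.log (isoGaussDensity n v x)
      = Real.log ((2 * π * v) ^ (-(n : ℝ) / 2)) + -(2 * v)⁻¹ * ‖x‖ ^ 2 := by
  rw [isoGaussDensity, Real.log_mul (by positivity) (Real.exp_pos _).ne',
    Real.log_exp]
  ring

theorem norm_gradient_log_isoGaussDensity (hv : 0 < v) (x : EuclideanSpace ℝ (Fin n)) :
    ‖gradient (fun y => Real.log (isoGaussDensity n v y)) x‖ = v⁻¹ * ‖x‖ := by
  have hderiv := (((hasStrictFDerivAt_norm_sq x).hasFDerivAt.const_mul (-(2 * v)⁻¹)).const_add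
    (Real.log ((2 * π * v) ^ (-(n : ℝ) / 2)))).fderiv
  simp only [log_isoGaussDensity n hv]
  rw [gradient, LinearIsometryEquiv.norm_map, hderiv, norm_smul, RCLike.norm_nsmul ℝ,
    innerSL_apply_norm, norm_neg, Real.norm_of_nonneg (by positivity), nsmul_eq_mul]
  field_simp
  norm_num

theorem isRegularDensity_isoGaussDensity (hv : 0 < v) :
    IsRegularDensity v⁻¹ 0 (isoGaussDensity n v) := by
  refine ⟨fun x => mul_pos (by positivity) (Real.exp_pos _), ?_, fun x => ?_⟩
  · have hnorm : Differentiable ℝ fun y : EuclideanSpace ℝ (Fin n) => ‖y‖ ^ 2 :=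
      differentiable_id.norm_sq ℝ
    unfold isoGaussDensity
    fun_prop
  · rw [norm_gradient_log_isoGaussDensity n hv, add_zero]

end Gaussian

theorem stmt11_general {Ω : Type*} [MeasurableSpace Ω] (P : Measure Ω) [IsProbabilityMeasure P]
    {n : ℕ} {B Z : Ω → EuclideanSpace ℝ (Fin n)} (hB : AEMeasurable B P) (hZ : AEMeasurable Z P)
    (hBmom : Integrable (fun ω => ‖B ω‖) P) {φ : EuclideanSpace ℝ (Fin n) → ℝ} {c₁ c₂ : ℝ}
    (hc₁ : 0 ≤ c₁) (hφ : IsRegularDensity c₁ c₂ φ) (hanti : RadiallyAntitone φ)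
    (hZlaw : Measure.map Z P = volume.withDensity fun x => ENNReal.ofReal (φ x))
    (hindep : IndepFun B Z P) :
    ∃ pY : EuclideanSpace ℝ (Fin n) → ℝ,
      Measure.map (fun ω => B ω + Z ω) P
          = volume.withDensity (fun x => ENNReal.ofReal (pY x)) ∧
        IsRegularDensity (3 * c₁) (4 * c₁ * (∫ ω, ‖B ω‖ ∂P) + c₂) pY := by
  have : IsProbabilityMeasure (P.map B) := Measure.isProbabilityMeasure_map hB
  have hμ : Integrable (fun b => ‖b‖) (P.map B) :=
    (integrable_map_measure (by fun_prop) hB).2 hBmom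
  have hφ₀ : ∀ u, 0 ≤ φ u := fun u => (hφ.1 u).le
  have hφm : Measurable φ := hφ.2.1.continuous.measurable
  refine ⟨convDensity (P.map B) φ, ?_, ?_⟩
  · rw [← conv_withDensity_ofReal hφm hφ₀ (hanti.integrable_sub hφ₀ hφm), ← hZlaw]
    exact hindep.map_add_eq_map_conv_map₀ hB hZ
  · rw [← integral_map hB (f := fun b => ‖b‖) (by fun_prop)]
    exact hφ.convDensity hμ hanti hc₁

theorem stmt11 {Ω : Type*} [MeasurableSpace Ω] (P : Measure Ω) [IsProbabilityMeasure P]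
    {n : ℕ} (B Z : Ω → EuclideanSpace ℝ (Fin n)) (hB : Measurable B) (hZ : Measurable Z)
    (hBmom : Integrable (fun ω => ‖B ω‖) P)
    (σ2 : ℝ) (hσ2 : 0 < σ2)
    (hZlaw : Measure.map Z P = volume.withDensity fun x => ENNReal.ofReal (isoGaussDensity n σ2 x))
    (hindep : IndepFun B Z P) :
    ∃ pY : EuclideanSpace ℝ (Fin n) → ℝ,
      Measure.map (fun ω => B ω + Z ω) P
          = volume.withDensity (fun x => ENNReal.ofReal (pY x)) ∧
        IsRegularDensity (3 / σ2) (4 / σ2 * ∫ ω, ‖B ω‖ ∂P) pY := by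
  simpa only [← div_eq_mul_inv, add_zero] using
    stmt11_general P hB.aemeasurable hZ.aemeasurable hBmom (inv_nonneg.2 hσ2.le)
      (isRegularDensity_isoGaussDensity n hσ2) (radiallyAntitone_isoGaussDensity n hσ2) hZlaw hindep

end
end
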